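/- arXiv:2311.11358 — 4 statements merged into one kernel-verified Lean document; each statement's English description precedes it below -/
import Mathlib

section
/- Let T > 0, let F : [0,T]×[0,T] → ℝ be continuous such that the partial derivative F₁(r,s) = ∂F(r,s)/∂r exists and is continuous on the triangle {(r,s) : 0 ≤ s ≤ r ≤ T}, let Θ be continuous on the triangle {(s,t) : 0 ≤ t ≤ s ≤ T}, and let ζ : [0,T] → ℝ be such that for all 0 ≤ t ≤ r ≤ T one has Θ(r,t)·F(r,r) + ∫_t^r Θ(s,t)·F₁(r,s) ds = ζ(r) (the value is independent of t). Then for every continuous h : [0,T] → ℝ and every t ∈ [0,T], ∫_t^T Θ(s,t)·( F(s,s)·h(s) + ∫_s^T F₁(r,s)·h(r) dr ) ds = ∫_t^T ζ(r)·h(r) dr. -/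
/-! Multiplying out, the left-hand side is `∫ Θ(s,t) F(s,s) h(s) ds` plus the iterated integral
of `Θ(s,t) F₁(r,s) h(r)` over the triangle `t ≤ s ≤ r ≤ T`. The integrand is continuous on this
compact triangle, so the order of integration may be exchanged (Dirichlet's formula,
`dirichlet_triangle`). Collecting the coefficient of `h(r)` then gives exactly the left-hand side
of the hypothesis on `ζ`. -/

open MeasureTheory Set

/-- Dirichlet's formula on the triangle `a ≤ s ≤ r ≤ b`, together with the interval integrability
of both inner integrals, which is needed to split sums under the outer integral. It is Fubini's
theorem for the extension of `G` by zero outside the triangle. -/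
lemma dirichlet_triangle {a b : ℝ} (hab : a ≤ b) (G : ℝ → ℝ → ℝ)
    (hG : ContinuousOn (fun p : ℝ × ℝ => G p.1 p.2)
      {p : ℝ × ℝ | a ≤ p.1 ∧ p.1 ≤ p.2 ∧ p.2 ≤ b}) :
    IntervalIntegrable (fun s => ∫ r in s..b, G s r) volume a b ∧
    IntervalIntegrable (fun r => ∫ s in a..r, G s r) volume a b ∧
    ∫ s in a..b, ∫ r in s..b, G s r = ∫ r in a..b, ∫ s in a..r, G s r := by
  set K : Set (ℝ × ℝ) := {p : ℝ × ℝ | a ≤ p.1 ∧ p.1 ≤ p.2 ∧ p.2 ≤ b} with hK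
  have hKclosed : IsClosed K :=
    (isClosed_le continuous_const continuous_fst).inter
      ((isClosed_le continuous_fst continuous_snd).inter
        (isClosed_le continuous_snd continuous_const))
  have hKcompact : IsCompact K := by
    refine (isCompact_Icc.prod isCompact_Icc : IsCompact (Icc a b ×ˢ Icc a b)).of_isClosed_subset
      hKclosed ?_
    rintro ⟨s, r⟩ ⟨h1, h2, h3⟩
    exact ⟨⟨h1, h2.trans h3⟩, ⟨h1.trans h2, h3⟩⟩
  have hint : Integrable (K.indicator fun p : ℝ × ℝ => G p.1 p.2)
      ((volume : Measure ℝ).prod volume) := by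
    rw [integrable_indicator_iff hKclosed.measurableSet]
    exact hG.integrableOn_compact hKcompact
  have hleft : (fun s => ∫ r, K.indicator (fun p : ℝ × ℝ => G p.1 p.2) (s, r)) =
      (Icc a b).indicator (fun s => ∫ r in s..b, G s r) := by
    funext s
    by_cases hs : s ∈ Icc a b
    · rw [indicator_of_mem hs, intervalIntegral.integral_of_le hs.2, ← integral_Icc_eq_integral_Ioc,
        ← integral_indicator measurableSet_Icc]
      congr 1
      funext r
      simp only [indicator, hK, mem_ofPred_eq, mem_Icc, hs.1, true_and]
    · rw [indicator_of_notMem hs, ← integral_zero ℝ ℝ]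
      congr 1
      funext r
      refine indicator_of_notMem (fun hm => hs ⟨hm.1, hm.2.1.trans hm.2.2⟩) _
  have hright : (fun r => ∫ s, K.indicator (fun p : ℝ × ℝ => G p.1 p.2) (s, r)) =
      (Icc a b).indicator (fun r => ∫ s in a..r, G s r) := by
    funext r
    by_cases hr : r ∈ Icc a b
    · rw [indicator_of_mem hr, intervalIntegral.integral_of_le hr.1, ← integral_Icc_eq_integral_Ioc,
        ← integral_indicator measurableSet_Icc]
      congr 1
      funext s
      simp only [indicator, hK, mem_ofPred_eq, mem_Icc, hr.2, and_true]
    · rw [indicator_of_notMem hr, ← integral_zero ℝ ℝ]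
      congr 1
      funext s
      refine indicator_of_notMem (fun hm => hr ⟨hm.1.trans hm.2.1, hm.2.2⟩) _
  have hl := hint.integral_prod_left
  have hr := hint.integral_prod_right
  rw [hleft, integrable_indicator_iff measurableSet_Icc] at hl
  rw [hright, integrable_indicator_iff measurableSet_Icc] at hr
  refine ⟨?_, ?_, ?_⟩
  · exact (intervalIntegrable_iff_integrableOn_Icc_of_le hab).2 hl
  · exact (intervalIntegrable_iff_integrableOn_Icc_of_le hab).2 hr
  · have hsw := integral_integral_swap
      (f := fun s r => K.indicator (fun p : ℝ × ℝ => G p.1 p.2) (s, r)) hint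
    rw [hleft, hright, integral_indicator measurableSet_Icc,
      integral_indicator measurableSet_Icc] at hsw
    rwa [intervalIntegral.integral_of_le hab, intervalIntegral.integral_of_le hab,
      ← integral_Icc_eq_integral_Ioc, ← integral_Icc_eq_integral_Ioc]

/-- Key computation in the proof of Theorem 3.2(2): if
`Θ(r,t)·F(r,r) + ∫_t^r Θ(s,t)·F₁(r,s) ds = ζ(r)` for all `0 ≤ t ≤ r ≤ T` (condition (A3)),
then `𝒦_Θ^*(K_F^* h)(t) = ∫_t^T ζ(r)·h(r) dr` for every continuous `h` and every
`t ∈ [0,T]`, where `(K_F^* h)(s) = F(s,s)h(s) + ∫_s^T F₁(r,s)h(r) dr`. -/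
theorem composition_identity_KThetaStar_KFstar
    (T : ℝ) (hT : 0 < T) (F F₁ Θ : ℝ → ℝ → ℝ) (ζ : ℝ → ℝ)
    (hFcont : ContinuousOn (fun p : ℝ × ℝ => F p.1 p.2) (Icc 0 T ×ˢ Icc 0 T))
    (hderiv : ∀ s r : ℝ, 0 ≤ s → s ≤ r → r ≤ T →
      HasDerivWithinAt (fun u => F u s) (F₁ r s) (Icc s T) r)
    (hF₁cont : ContinuousOn (fun p : ℝ × ℝ => F₁ p.1 p.2)
      {p : ℝ × ℝ | 0 ≤ p.2 ∧ p.2 ≤ p.1 ∧ p.1 ≤ T})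
    (hΘcont : ContinuousOn (fun p : ℝ × ℝ => Θ p.1 p.2)
      {p : ℝ × ℝ | 0 ≤ p.2 ∧ p.2 ≤ p.1 ∧ p.1 ≤ T})
    (hζ : ∀ t r : ℝ, 0 ≤ t → t ≤ r → r ≤ T →
      Θ r t * F r r + (∫ s in t..r, Θ s t * F₁ r s) = ζ r)
    (h : ℝ → ℝ) (hh : Continuous h) (t : ℝ) (ht : t ∈ Icc (0:ℝ) T) :
    ∫ s in t..T, Θ s t * (F s s * h s + ∫ r in s..T, F₁ r s * h r) =
      ∫ r in t..T, ζ r * h r := by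
  obtain ⟨ht0, htT⟩ := ht
  obtain ⟨hl, hr, hswap⟩ := dirichlet_triangle htT (fun s r => Θ s t * F₁ r s * h r) (by
    refine ContinuousOn.mul (ContinuousOn.mul ?_ ?_) (hh.comp continuous_snd).continuousOn
    · refine hΘcont.comp (f := fun p : ℝ × ℝ => (p.1, t)) (by fun_prop) ?_
      rintro ⟨s, r⟩ ⟨h1, h2, h3⟩
      exact ⟨ht0, h1, h2.trans h3⟩
    · refine hF₁cont.comp (f := fun p : ℝ × ℝ => (p.2, p.1)) (by fun_prop) ?_
      rintro ⟨s, r⟩ ⟨h1, h2, h3⟩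
      exact ⟨ht0.trans h1, h2, h3⟩)
  have hdiag : IntervalIntegrable (fun s => Θ s t * F s s * h s) volume t T := by
    refine ContinuousOn.intervalIntegrable_of_Icc htT ?_
    refine ContinuousOn.mul (ContinuousOn.mul ?_ ?_) hh.continuousOn
    · refine hΘcont.comp (f := fun s : ℝ => (s, t)) (by fun_prop) ?_
      intro s hs
      exact ⟨ht0, hs.1, hs.2⟩
    · refine hFcont.comp (f := fun s : ℝ => (s, s)) (by fun_prop) ?_
      intro s hs
      exact ⟨⟨ht0.trans hs.1, hs.2⟩, ⟨ht0.trans hs.1, hs.2⟩⟩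
  calc ∫ s in t..T, Θ s t * (F s s * h s + ∫ r in s..T, F₁ r s * h r)
      = ∫ s in t..T, (Θ s t * F s s * h s + ∫ r in s..T, Θ s t * F₁ r s * h r) := by
        congr 1
        funext s
        simp only [mul_assoc, intervalIntegral.integral_const_mul, mul_add]
    _ = ∫ r in t..T, (Θ r t * F r r * h r + ∫ s in t..r, Θ s t * F₁ r s * h r) := by
        rw [intervalIntegral.integral_add hdiag hl, intervalIntegral.integral_add hdiag hr, hswap]
    _ = ∫ r in t..T, ζ r * h r := by
        refine intervalIntegral.integral_congr fun r hr => ?_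
        rw [uIcc_of_le htT] at hr
        simp only [intervalIntegral.integral_mul_const]
        rw [← hζ t r ht0 hr.1 hr.2, add_mul]
end

section
/- Let T > 0, let F : [0,T]×[0,T] → ℝ be continuous such that F₁(r,s) = ∂F(r,s)/∂r exists and is continuous on the triangle {(r,s) : 0 ≤ s ≤ r ≤ T}, let Θ be continuous on the triangle {(s,t) : 0 ≤ t ≤ s ≤ T}, and let ζ : [0,T] → ℝ be continuous with ζ(t) ≠ 0 for all t, such that for all 0 ≤ t ≤ r ≤ T one has Θ(r,t)·F(r,r) + ∫_t^r Θ(s,t)·F₁(r,s) ds = ζ(r). Then for every continuous h : [0,T] → ℝ, the function t ↦ ∫_t^T Θ(s,t)·(K_F^* h)(s) ds is differentiable at every t ∈ [0,T] with derivative −ζ(t)·h(t); consequently h(t) = −(1/ζ(t)) · (d/dt) ∫_t^T Θ(s,t)·(K_F^* h)(s) ds for all t, i.e. (K_F^*)^{-1}(K_F^* h) = h. -/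
open MeasureTheory Set

/-!
Exchanging the order of integration over the triangle `u ≤ s ≤ r ≤ T` turns
`∫_u^T Θ(s,u) (K_F^* h)(s) ds` into `∫_u^T (Θ(r,u) F(r,r) + ∫_u^r Θ(s,u) F₁(r,s) ds) h(r) dr`.
The bracket is `ζ(r)`, whatever `u` is, so on `[0,T]` the function to be differentiated is
`u ↦ ∫_u^T ζ(r) h(r) dr`, and the fundamental theorem of calculus gives the derivative `-ζ h`.
The exchange is `integral_triangle_swap`, which also records that both inner integrals are
integrable functions of the remaining variable.
-/

/-- Fubini's theorem on the triangle `a ≤ s ≤ r ≤ b`, for an integrand `g r s` continuous there and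
arbitrary elsewhere. -/
theorem integral_triangle_swap {a b : ℝ} (hab : a ≤ b) {g : ℝ → ℝ → ℝ}
    (hg : ContinuousOn (fun p : ℝ × ℝ => g p.1 p.2)
      {p : ℝ × ℝ | a ≤ p.2 ∧ p.2 ≤ p.1 ∧ p.1 ≤ b}) :
    IntervalIntegrable (fun s => ∫ r in s..b, g r s) volume a b ∧
    IntervalIntegrable (fun r => ∫ s in a..r, g r s) volume a b ∧
    (∫ s in a..b, ∫ r in s..b, g r s) = ∫ r in a..b, ∫ s in a..r, g r s := by
  set D : Set (ℝ × ℝ) := {p : ℝ × ℝ | a ≤ p.2 ∧ p.2 ≤ p.1 ∧ p.1 ≤ b} with hD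
  have hDclosed : IsClosed D :=
    (isClosed_le continuous_const continuous_snd).inter
      ((isClosed_le continuous_snd continuous_fst).inter
        (isClosed_le continuous_fst continuous_const))
  have hDcompact : IsCompact D := by
    refine (isCompact_Icc (a := ((a, a) : ℝ × ℝ)) (b := (b, b))).of_isClosed_subset hDclosed ?_
    rintro ⟨r, s⟩ ⟨h1, h2, h3⟩
    simp only at h1 h2 h3
    exact ⟨⟨by simp only; linarith, h1⟩, ⟨h3, by simp only; linarith⟩⟩
  have hint : Integrable (D.indicator fun p : ℝ × ℝ => g p.1 p.2)
      ((volume : Measure ℝ).prod (volume : Measure ℝ)) :=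
    (integrable_indicator_iff hDclosed.measurableSet).2 (hg.integrableOn_compact hDcompact)
  have hr : (fun s => ∫ r, D.indicator (fun p : ℝ × ℝ => g p.1 p.2) (r, s)) =
      (Icc a b).indicator fun s => ∫ r in s..b, g r s := by
    funext s
    by_cases hs : s ∈ Icc a b
    · rw [indicator_of_mem hs, intervalIntegral.integral_of_le hs.2, ← integral_Icc_eq_integral_Ioc,
        ← integral_indicator measurableSet_Icc]
      refine integral_congr_ae (Filter.Eventually.of_forall fun r => ?_)
      have hiff : ((r, s) ∈ D) ↔ r ∈ Icc s b := ⟨fun h => h.2, fun h => ⟨hs.1, h⟩⟩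
      simp only [indicator, hiff]
    · rw [indicator_of_notMem hs]
      refine integral_eq_zero_of_ae (Filter.Eventually.of_forall fun r => ?_)
      exact indicator_of_notMem (fun h => hs ⟨h.1, h.2.1.trans h.2.2⟩) _
  have hs : (fun r => ∫ s, D.indicator (fun p : ℝ × ℝ => g p.1 p.2) (r, s)) =
      (Icc a b).indicator fun r => ∫ s in a..r, g r s := by
    funext r
    by_cases hr : r ∈ Icc a b
    · rw [indicator_of_mem hr, intervalIntegral.integral_of_le hr.1, ← integral_Icc_eq_integral_Ioc,
        ← integral_indicator measurableSet_Icc]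
      refine integral_congr_ae (Filter.Eventually.of_forall fun s => ?_)
      have hiff : ((r, s) ∈ D) ↔ s ∈ Icc a r :=
        ⟨fun h => ⟨h.1, h.2.1⟩, fun h => ⟨h.1, h.2, hr.2⟩⟩
      simp only [indicator, hiff]
      split_ifs <;> rfl
    · rw [indicator_of_notMem hr]
      refine integral_eq_zero_of_ae (Filter.Eventually.of_forall fun s => ?_)
      exact indicator_of_notMem (fun h => hr ⟨h.1.trans h.2.1, h.2.2⟩) _
  have h1 := hint.integral_prod_right
  have h2 := hint.integral_prod_left
  have hsw := integral_integral_swap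
    (f := fun r s => D.indicator (fun p : ℝ × ℝ => g p.1 p.2) (r, s)) hint
  rw [hr, hs, integral_indicator measurableSet_Icc, integral_indicator measurableSet_Icc] at hsw
  rw [hr, integrable_indicator_iff measurableSet_Icc] at h1
  rw [hs, integrable_indicator_iff measurableSet_Icc] at h2
  refine ⟨(intervalIntegrable_iff_integrableOn_Icc_of_le hab).2 h1,
    (intervalIntegrable_iff_integrableOn_Icc_of_le hab).2 h2, ?_⟩
  rw [intervalIntegral.integral_of_le hab, intervalIntegral.integral_of_le hab,
    ← integral_Icc_eq_integral_Ioc, ← integral_Icc_eq_integral_Ioc]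
  exact hsw.symm

/-- Theorem 3.2(2) of the paper: under condition (A3)
(`Θ(r,t)·F(r,r) + ∫_t^r Θ(s,t)·F₁(r,s) ds = ζ(r)` with `ζ` continuous and nowhere zero),
for every continuous `h` the function `t ↦ ∫_t^T Θ(s,t)·(K_F^* h)(s) ds` is differentiable on
`[0,T]` with derivative `−ζ(t)·h(t)`; consequently
`h(t) = −(1/ζ(t))·(d/dt)∫_t^T Θ(s,t)·(K_F^* h)(s) ds`, i.e. `(K_F^*)⁻¹(K_F^* h) = h`,
where `(K_F^* h)(s) = F(s,s)h(s) + ∫_s^T F₁(r,s)h(r) dr`. -/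
theorem KFstar_inverse_via_derivative
    (T : ℝ) (hT : 0 < T) (F F₁ Θ : ℝ → ℝ → ℝ) (ζ : ℝ → ℝ)
    (hFcont : ContinuousOn (fun p : ℝ × ℝ => F p.1 p.2) (Icc 0 T ×ˢ Icc 0 T))
    (hderiv : ∀ s r : ℝ, 0 ≤ s → s ≤ r → r ≤ T →
      HasDerivWithinAt (fun u => F u s) (F₁ r s) (Icc s T) r)
    (hF₁cont : ContinuousOn (fun p : ℝ × ℝ => F₁ p.1 p.2)
      {p : ℝ × ℝ | 0 ≤ p.2 ∧ p.2 ≤ p.1 ∧ p.1 ≤ T})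
    (hΘcont : ContinuousOn (fun p : ℝ × ℝ => Θ p.1 p.2)
      {p : ℝ × ℝ | 0 ≤ p.2 ∧ p.2 ≤ p.1 ∧ p.1 ≤ T})
    (hζcont : Continuous ζ) (hζne : ∀ t ∈ Icc (0:ℝ) T, ζ t ≠ 0)
    (hζ : ∀ t r : ℝ, 0 ≤ t → t ≤ r → r ≤ T →
      Θ r t * F r r + (∫ s in t..r, Θ s t * F₁ r s) = ζ r)
    (h : ℝ → ℝ) (hh : Continuous h) (t : ℝ) (ht : t ∈ Icc (0:ℝ) T) :
    HasDerivWithinAt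
        (fun u => ∫ s in u..T, Θ s u * (F s s * h s + ∫ r in s..T, F₁ r s * h r))
        (-(ζ t * h t)) (Icc 0 T) t ∧
      h t = -(1 / ζ t) *
        derivWithin
          (fun u => ∫ s in u..T, Θ s u * (F s s * h s + ∫ r in s..T, F₁ r s * h r))
          (Icc 0 T) t := by
  have key : ∀ u ∈ Icc (0:ℝ) T,
      (∫ s in u..T, Θ s u * (F s s * h s + ∫ r in s..T, F₁ r s * h r)) =
        ∫ r in u..T, ζ r * h r := by
    intro u hu
    have hΘu : ContinuousOn (fun s => Θ s u) (Icc u T) :=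
      hΘcont.comp (f := fun s : ℝ => (s, u)) (by fun_prop) fun s hs => ⟨hu.1, hs.1, hs.2⟩
    have hFd : ContinuousOn (fun s => F s s) (Icc u T) :=
      hFcont.comp (f := fun s : ℝ => (s, s)) (by fun_prop) fun s hs =>
        ⟨⟨hu.1.trans hs.1, hs.2⟩, ⟨hu.1.trans hs.1, hs.2⟩⟩
    have hg : ContinuousOn (fun p : ℝ × ℝ => Θ p.2 u * (F₁ p.1 p.2 * h p.1))
        {p : ℝ × ℝ | u ≤ p.2 ∧ p.2 ≤ p.1 ∧ p.1 ≤ T} := by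
      refine ContinuousOn.mul ?_ (ContinuousOn.mul ?_ (by fun_prop))
      · exact hΘu.comp (f := fun p : ℝ × ℝ => p.2) (by fun_prop)
          fun p hp => ⟨hp.1, hp.2.1.trans hp.2.2⟩
      · exact hF₁cont.mono fun p hp => ⟨hu.1.trans hp.1, hp.2⟩
    obtain ⟨i1, i2, hsw⟩ := integral_triangle_swap (g := fun r s => Θ s u * (F₁ r s * h r)) hu.2 hg
    have hd : IntervalIntegrable (fun s => Θ s u * (F s s * h s)) volume u T :=
      ContinuousOn.intervalIntegrable_of_Icc hu.2 (hΘu.mul (hFd.mul hh.continuousOn))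
    calc (∫ s in u..T, Θ s u * (F s s * h s + ∫ r in s..T, F₁ r s * h r))
        = ∫ s in u..T, (Θ s u * (F s s * h s) + ∫ r in s..T, Θ s u * (F₁ r s * h r)) := by
          simp only [mul_add, intervalIntegral.integral_const_mul]
      _ = ∫ r in u..T, (Θ r u * (F r r * h r) + ∫ s in u..r, Θ s u * (F₁ r s * h r)) := by
          rw [intervalIntegral.integral_add hd i1, intervalIntegral.integral_add hd i2, hsw]
      _ = ∫ r in u..T, ζ r * h r := by
          refine intervalIntegral.integral_congr fun r hr => ?_
          rw [uIcc_of_le hu.2] at hr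
          simp only [← hζ u r hu.1 hr.1 hr.2, add_mul, ← mul_assoc,
            intervalIntegral.integral_mul_const]
  have hζh : Continuous fun r => ζ r * h r := hζcont.mul hh
  have hFTC : HasDerivAt (fun u => ∫ r in u..T, ζ r * h r) (-(ζ t * h t)) t :=
    intervalIntegral.integral_hasDerivAt_left (hζh.intervalIntegrable _ _)
      (hζh.stronglyMeasurableAtFilter _ _) hζh.continuousAt
  have hmain := hFTC.hasDerivWithinAt.congr (s := Icc 0 T) key (key t ht)
  refine ⟨hmain, ?_⟩
  rw [hmain.derivWithin (uniqueDiffOn_Icc hT t ht)]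
  field_simp [hζne t ht]
end

section
/- Let T > 0 and let F₁ : [0,T]×[0,T] → ℝ be measurable and square-integrable with F₁(u,r) = 0 whenever r > u, and define F(t,s) = ∫_s^t F₁(u,s) du for 0 ≤ s ≤ t ≤ T. Then for all s, t ∈ [0,T], ∫_0^t ∫_0^s ( ∫_0^{min(u,v)} F₁(u,r)·F₁(v,r) dr ) dv du = ∫_0^{min(t,s)} F(t,r)·F(s,r) dr. -/
open MeasureTheory Set

/-!
Since `F₁ u r = 0` for `u < r`, every inner integral may be taken over a fixed interval:
`∫_0^{u∧v} F₁ u r * F₁ v r dr = ∫_0^T F₁ u r * F₁ v r dr` for `u, v ∈ (0, T]`, and, for `0 < r`,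
`∫_0^t F₁ u r du` equals `F t r` if `r ≤ t` and vanishes if `t < r`. The identity is then Fubini's
theorem for `(r, u, v) ↦ F₁ u r * F₁ v r` on `(0,T] × (0,t] × (0,s]`. This function is integrable
there because `|a * b| ≤ a ^ 2 + b ^ 2`, `F₁` is square-integrable and the measures are finite
(`integrable_triple`).
-/

/-- Integrability of the triple integrand: it is dominated by `f (r, u) ^ 2 + f (r, v) ^ 2`, and each
summand is integrable since the missing variable ranges over a finite measure space. -/
lemma integrable_triple (μ ν κ : Measure ℝ) [IsFiniteMeasure μ] [IsFiniteMeasure ν]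
    [IsFiniteMeasure κ] (f : ℝ × ℝ → ℝ) (hf : Measurable f)
    (h1 : Integrable (fun p => f p ^ 2) (μ.prod ν))
    (h2 : Integrable (fun p => f p ^ 2) (μ.prod κ)) :
    Integrable (fun q : ℝ × (ℝ × ℝ) => f (q.1, q.2.1) * f (q.1, q.2.2)) (μ.prod (ν.prod κ)) := by
  have key : ∀ (ν κ : Measure ℝ) [IsFiniteMeasure ν] [IsFiniteMeasure κ],
      Integrable (fun p => f p ^ 2) (μ.prod ν) →
      Integrable (fun q : ℝ × (ℝ × ℝ) => f (q.1, q.2.1) ^ 2) (μ.prod (ν.prod κ)) := by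
    intro ν κ _ _ h
    have h' := h.comp_fst κ
    exact ((measurePreserving_prodAssoc μ ν κ).integrable_comp_emb
      MeasurableEquiv.prodAssoc.measurableEmbedding).1 h'
  have k1 := key ν κ h1
  have k2 : Integrable (fun q : ℝ × (ℝ × ℝ) => f (q.1, q.2.2) ^ 2) (μ.prod (ν.prod κ)) :=
    ((MeasurePreserving.id μ).prod
      (Measure.measurePreserving_swap (μ := ν) (ν := κ))).integrable_comp_of_integrable
      (key κ ν h2)
  refine (k1.add k2).mono' ?_ (Filter.Eventually.of_forall fun q => ?_)
  · exact Measurable.aestronglyMeasurable (by fun_prop)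
  · simp only [Pi.add_apply, Real.norm_eq_abs, abs_le]
    constructor <;>
      nlinarith [sq_nonneg (f (q.1, q.2.1) + f (q.1, q.2.2)),
        sq_nonneg (f (q.1, q.2.1) - f (q.1, q.2.2)),
        sq_nonneg (f (q.1, q.2.1)), sq_nonneg (f (q.1, q.2.2))]

/-- Equation (3.29) in the proof of Lemma 3.10: for a square-integrable kernel `F₁` vanishing
above the diagonal and `F(t,s) = ∫_s^t F₁(u,s) du`, the covariance of the `F`-Gaussian process
satisfies `∫_0^t ∫_0^s (∫_0^{u∧v} F₁(u,r)F₁(v,r) dr) dv du = ∫_0^{t∧s} F(t,r)F(s,r) dr`. -/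
theorem covariance_double_integral
    (T : ℝ) (hT : 0 < T) (F₁ F : ℝ → ℝ → ℝ)
    (hF₁meas : Measurable (fun p : ℝ × ℝ => F₁ p.1 p.2))
    (hF₁L2 : IntegrableOn (fun p : ℝ × ℝ => (F₁ p.1 p.2) ^ 2) (Icc 0 T ×ˢ Icc 0 T))
    (hvanish : ∀ u r : ℝ, u < r → F₁ u r = 0)
    (hF : ∀ s t : ℝ, 0 ≤ s → s ≤ t → t ≤ T → F t s = ∫ u in s..t, F₁ u s)
    (s t : ℝ) (hs : s ∈ Icc (0:ℝ) T) (ht : t ∈ Icc (0:ℝ) T) :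
    (∫ u in (0:ℝ)..t, ∫ v in (0:ℝ)..s, ∫ r in (0:ℝ)..(min u v), F₁ u r * F₁ v r) =
      ∫ r in (0:ℝ)..(min t s), F t r * F s r := by
  obtain ⟨hs0, hsT⟩ := hs
  obtain ⟨ht0, htT⟩ := ht
  have hL2 : ∀ a ≤ T, Integrable (fun p : ℝ × ℝ => F₁ p.2 p.1 ^ 2)
      ((volume.restrict (Ioc 0 T)).prod (volume.restrict (Ioc 0 a))) := by
    intro a ha
    have h : Integrable (fun p : ℝ × ℝ => F₁ p.1 p.2 ^ 2)
        ((volume.restrict (Ioc 0 a)).prod (volume.restrict (Ioc 0 T))) := by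
      rw [Measure.prod_restrict]
      exact hF₁L2.mono_set (prod_mono ((Ioc_subset_Ioc_right ha).trans Ioc_subset_Icc_self)
        Ioc_subset_Icc_self)
    exact h.swap
  have hint := integrable_triple (volume.restrict (Ioc 0 T)) (volume.restrict (Ioc 0 t))
    (volume.restrict (Ioc 0 s)) (fun p => F₁ p.2 p.1) (hF₁meas.comp measurable_swap)
    (hL2 t htT) (hL2 s hsT)
  have hA : ∀ a, a ≤ T → ∀ r, 0 < r → r ≤ a → F a r = ∫ u in Ioc 0 a, F₁ u r := by
    intro a ha r hr hra
    rw [hF r a hr.le hra ha, intervalIntegral.integral_of_le hra]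
    -- `F₁ r r` need not vanish, so `r` is first added to the domain, at no cost to the integral.
    rw [← integral_Icc_eq_integral_Ioc]
    refine (setIntegral_eq_of_subset_of_forall_sdiff_eq_zero measurableSet_Ioc
      (fun u hu => ⟨hr.trans_le hu.1, hu.2⟩) fun u hu => hvanish u r ?_).symm
    by_contra! h
    exact hu.2 ⟨h, hu.1.2⟩
  have hA0 : ∀ a r, a < r → ∫ u in Ioc 0 a, F₁ u r = 0 := fun a r har =>
    setIntegral_eq_zero_of_forall_eq_zero fun u hu => hvanish u r (hu.2.trans_lt har)
  have hL : ∀ u ∈ Ioc 0 t, ∀ v ∈ Ioc 0 s, (∫ r in (0:ℝ)..(min u v), F₁ u r * F₁ v r) =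
      ∫ r in Ioc 0 T, F₁ u r * F₁ v r := by
    intro u hu v hv
    rw [intervalIntegral.integral_of_le (le_min hu.1.le hv.1.le)]
    refine (setIntegral_eq_of_subset_of_forall_sdiff_eq_zero measurableSet_Ioc
      (Ioc_subset_Ioc_right ((min_le_left _ _).trans (hu.2.trans htT))) fun r hr => ?_).symm
    have h : min u v < r := by
      by_contra! h
      exact hr.2 ⟨hr.1.1, h⟩
    rcases min_lt_iff.1 h with h | h <;> simp [hvanish _ _ h]
  have hR : (∫ r in (0:ℝ)..(min t s), F t r * F s r) =
      ∫ r in Ioc 0 T, (∫ u in Ioc 0 t, F₁ u r) * ∫ v in Ioc 0 s, F₁ v r := by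
    rw [intervalIntegral.integral_of_le (le_min ht0 hs0)]
    have h1 : (∫ r in Ioc 0 (min t s), F t r * F s r) =
        ∫ r in Ioc 0 (min t s), (∫ u in Ioc 0 t, F₁ u r) * ∫ v in Ioc 0 s, F₁ v r := by
      refine setIntegral_congr_fun measurableSet_Ioc fun r hr => ?_
      rw [hA t htT r hr.1 (hr.2.trans (min_le_left _ _)),
        hA s hsT r hr.1 (hr.2.trans (min_le_right _ _))]
    rw [h1]
    refine (setIntegral_eq_of_subset_of_forall_sdiff_eq_zero measurableSet_Ioc
      (Ioc_subset_Ioc_right ((min_le_left _ _).trans htT)) fun r hr => ?_).symm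
    have h : min t s < r := by
      by_contra! h
      exact hr.2 ⟨hr.1.1, h⟩
    rcases min_lt_iff.1 h with h | h <;> simp [hA0 _ _ h]
  rw [hR, intervalIntegral.integral_of_le ht0]
  calc _ = ∫ u in Ioc 0 t, ∫ v in Ioc 0 s, ∫ r in Ioc 0 T, F₁ u r * F₁ v r := by
        refine setIntegral_congr_fun measurableSet_Ioc fun u hu => ?_
        rw [intervalIntegral.integral_of_le hs0]
        exact setIntegral_congr_fun measurableSet_Ioc fun v hv => hL u hu v hv
    _ = ∫ p, (∫ r in Ioc 0 T, F₁ p.1 r * F₁ p.2 r)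
          ∂((volume.restrict (Ioc 0 t)).prod (volume.restrict (Ioc 0 s))) :=
        (integral_prod _ hint.integral_prod_right).symm
    _ = ∫ r in Ioc 0 T, ∫ p, F₁ p.1 r * F₁ p.2 r
          ∂((volume.restrict (Ioc 0 t)).prod (volume.restrict (Ioc 0 s))) :=
        (integral_integral_swap
          (f := fun (r : ℝ) (p : ℝ × ℝ) => F₁ p.1 r * F₁ p.2 r) hint).symm
    _ = _ := by
        congr 1 with r
        exact integral_prod_mul (fun u => F₁ u r) (fun v => F₁ v r)
end

section
/- Let T > 0 and let F : [0,T]×[0,T] → ℝ be continuous such that the partial derivative F₁(t,s) = ∂F(t,s)/∂t exists on the triangle {(t,s) : 0 ≤ s ≤ t ≤ T} and is square-integrable there. Then for every δ > 0 and every h ∈ L²([0,T];ℝ), ∫_0^T ( F(t,t)·h(t) + ∫_0^t F₁(t,s)·h(s) ds )² dt ≤ ( (1+δ)·sup_{t∈[0,T]} F(t,t)² + ((1+δ)/δ)·∫_0^T ∫_0^t F₁(t,s)² ds dt ) · ∫_0^T h(s)² ds. -/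
open MeasureTheory Set

/-!
The estimate is a pointwise one, integrated over `t`. Young's inequality
`(a + b)² ≤ (1 + δ) a² + ((1 + δ)/δ) b²` separates the diagonal term `F(t,t) h(t)` from the Volterra
term `∫_0^t F₁(t,s) h(s) ds`. The former is bounded by the supremum of `F(t,t)²`, finite by
compactness; the latter by the Cauchy–Schwarz inequality (`sq_integral_mul_le`), which gives
`(∫_0^t F₁(t,s)² ds) · ∫_0^T h²` for almost every `t`. Fubini on the triangle
(`integrable_triangle_sections`) shows that the sections `F₁(t,·)²` are integrable for almost every
`t` and that their integrals form an integrable function of `t`, so the resulting bound can be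
integrated. Integrability of the left-hand side is not needed, as its integrand is nonnegative.
-/

/-- Cauchy–Schwarz inequality for real square-integrable functions. It holds because the quadratic
polynomial `x ↦ ∫ (x f + g)²` is nonnegative, hence has nonpositive discriminant. -/
theorem sq_integral_mul_le {α : Type*} [MeasurableSpace α] {μ : Measure α} {f g : α → ℝ}
    (hf : AEStronglyMeasurable f μ) (hg : AEStronglyMeasurable g μ)
    (hf2 : Integrable (fun x => f x ^ 2) μ) (hg2 : Integrable (fun x => g x ^ 2) μ) :
    (∫ x, f x * g x ∂μ) ^ 2 ≤ (∫ x, f x ^ 2 ∂μ) * ∫ x, g x ^ 2 ∂μ := by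
  have hfg : Integrable (fun x => f x * g x) μ :=
    ((memLp_two_iff_integrable_sq hf).2 hf2).integrable_mul
      ((memLp_two_iff_integrable_sq hg).2 hg2)
  have key : ∀ x : ℝ, 0 ≤ (∫ a, f a ^ 2 ∂μ) * (x * x) + (2 * ∫ a, f a * g a ∂μ) * x
      + ∫ a, g a ^ 2 ∂μ := by
    intro x
    have h0 : 0 ≤ ∫ a, (x * f a + g a) ^ 2 ∂μ := integral_nonneg fun a => sq_nonneg _
    have h1 : ∫ a, (x * f a + g a) ^ 2 ∂μ
        = ∫ a, ((x * x) * f a ^ 2 + (2 * x) * (f a * g a)) + g a ^ 2 ∂μ := by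
      congr 1
      ext a
      ring
    have h2 : Integrable (fun a => (x * x) * f a ^ 2 + (2 * x) * (f a * g a)) μ :=
      (hf2.const_mul _).add (hfg.const_mul _)
    rw [h1, integral_add h2 hg2,
      integral_add (hf2.const_mul _) (hfg.const_mul _), integral_const_mul,
      integral_const_mul] at h0
    linarith
  have hd := discrim_le_zero key
  rw [discrim] at hd
  nlinarith

/-- Fubini's theorem on the triangle `0 ≤ s ≤ t ≤ T`. -/
theorem integrable_triangle_sections {T : ℝ} {f : ℝ → ℝ → ℝ}
    (hf : IntegrableOn (fun p : ℝ × ℝ => f p.1 p.2)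
      {p : ℝ × ℝ | 0 ≤ p.2 ∧ p.2 ≤ p.1 ∧ p.1 ≤ T}) :
    (∀ᵐ t ∂(volume.restrict (Ioc 0 T)), IntegrableOn (f t) (Ioc 0 t)) ∧
      IntegrableOn (fun t => ∫ s in (0:ℝ)..t, f t s) (Ioc 0 T) := by
  have hmeas : MeasurableSet {p : ℝ × ℝ | 0 ≤ p.2 ∧ p.2 ≤ p.1 ∧ p.1 ≤ T} :=
    (measurableSet_le measurable_const measurable_snd).inter
      ((measurableSet_le measurable_snd measurable_fst).inter
        (measurableSet_le measurable_fst measurable_const))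
  have hI := hf.integrable_indicator hmeas
  rw [Measure.volume_eq_prod] at hI
  have hsec : ∀ t ∈ Ioc 0 T, (fun s => indicator {p : ℝ × ℝ | 0 ≤ p.2 ∧ p.2 ≤ p.1 ∧ p.1 ≤ T}
      (fun p : ℝ × ℝ => f p.1 p.2) (t, s)) = indicator (Icc 0 t) (f t) := by
    intro t ht
    ext s
    simp only [indicator_apply, mem_ofPred_eq, mem_Icc, ht.2, and_true]
  constructor
  · filter_upwards [ae_restrict_of_ae hI.prod_right_ae, ae_restrict_mem measurableSet_Ioc]
      with t ht htm
    rw [hsec t htm, integrable_indicator_iff measurableSet_Icc] at ht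
    exact ht.mono_set Ioc_subset_Icc_self
  · refine hI.integral_prod_left.integrableOn.congr_fun (fun t ht => ?_) measurableSet_Ioc
    simp only
    rw [hsec t ht, integral_indicator measurableSet_Icc, integral_Icc_eq_integral_Ioc,
      intervalIntegral.integral_of_le ht.1.le]

/-- The key estimate (5.15) in the proof of the Ornstein–Uhlenbeck logarithmic Sobolev
inequality (Theorem 5.3):
`∫_0^T (F(t,t)h(t) + ∫_0^t F₁(t,s)h(s) ds)² dt ≤
  ((1+δ)·sup_{t∈[0,T]} F(t,t)² + ((1+δ)/δ)·∫_0^T∫_0^t F₁(t,s)² ds dt)·∫_0^T h(s)² ds`. -/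
theorem OU_LSI_key_estimate
    (T : ℝ) (hT : 0 < T) (F F₁ : ℝ → ℝ → ℝ)
    (hFcont : ContinuousOn (fun p : ℝ × ℝ => F p.1 p.2) (Icc 0 T ×ˢ Icc 0 T))
    (hderiv : ∀ s t : ℝ, 0 ≤ s → s ≤ t → t ≤ T →
      HasDerivWithinAt (fun u => F u s) (F₁ t s) (Icc s T) t)
    (hF₁meas : Measurable (fun p : ℝ × ℝ => F₁ p.1 p.2))
    (hF₁L2 : IntegrableOn (fun p : ℝ × ℝ => (F₁ p.1 p.2) ^ 2)
      {p : ℝ × ℝ | 0 ≤ p.2 ∧ p.2 ≤ p.1 ∧ p.1 ≤ T})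
    (δ : ℝ) (hδ : 0 < δ) (h : ℝ → ℝ)
    (hhmeas : Measurable h) (hhL2 : IntegrableOn (fun s => (h s) ^ 2) (Icc 0 T)) :
    ∫ t in (0:ℝ)..T, (F t t * h t + ∫ s in (0:ℝ)..t, F₁ t s * h s) ^ 2 ≤
      ((1 + δ) * (⨆ t : Icc (0:ℝ) T, (F t t) ^ 2) +
          ((1 + δ) / δ) * ∫ t in (0:ℝ)..T, ∫ s in (0:ℝ)..t, (F₁ t s) ^ 2) *
        ∫ s in (0:ℝ)..T, (h s) ^ 2 := by
  set S := ⨆ t : Icc (0:ℝ) T, (F t t) ^ 2 with hS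
  have hbdd : BddAbove (range fun t : Icc (0:ℝ) T => (F t t) ^ 2) := by
    have hc : Continuous fun t : Icc (0:ℝ) T => (F t t) ^ 2 :=
      (hFcont.comp_continuous (continuous_subtype_val.prodMk continuous_subtype_val)
        (fun t => ⟨t.2, t.2⟩)).pow 2
    exact (isCompact_range hc).bddAbove
  obtain ⟨hsec, hG⟩ := integrable_triangle_sections (f := fun t s => F₁ t s ^ 2) hF₁L2
  have hh : IntegrableOn (fun s => h s ^ 2) (Ioc 0 T) := hhL2.mono_set Ioc_subset_Icc_self
  simp only [intervalIntegral.integral_of_le hT.le]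
  set H := ∫ s in Ioc 0 T, h s ^ 2 with hH
  have hA : IntegrableOn (fun t => ((1 + δ) * S) * h t ^ 2) (Ioc 0 T) := hh.const_mul _
  have hB : IntegrableOn (fun t => ((1 + δ) / δ * H) * ∫ s in (0:ℝ)..t, F₁ t s ^ 2) (Ioc 0 T) :=
    hG.const_mul _
  have hrhs : ((1 + δ) * S + (1 + δ) / δ * ∫ t in Ioc 0 T, ∫ s in (0:ℝ)..t, F₁ t s ^ 2) * H
      = ∫ t in Ioc 0 T, (((1 + δ) * S) * h t ^ 2
        + ((1 + δ) / δ * H) * ∫ s in (0:ℝ)..t, F₁ t s ^ 2) := by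
    rw [integral_add hA hB, integral_const_mul, integral_const_mul]
    ring
  rw [hrhs]
  refine integral_mono_of_nonneg (ae_of_all _ fun t => sq_nonneg _) (hA.add hB) ?_
  filter_upwards [hsec, ae_restrict_mem measurableSet_Ioc] with t hts ht
  have hdiag : (F t t) ^ 2 ≤ S := le_ciSup hbdd (⟨t, ht.1.le, ht.2⟩ : Icc (0:ℝ) T)
  have hsub : Ioc 0 t ⊆ Ioc 0 T := Ioc_subset_Ioc_right ht.2
  have hmono : ∫ s in Ioc 0 t, h s ^ 2 ≤ H :=
    setIntegral_mono_set hh (ae_of_all _ fun s => sq_nonneg _) hsub.eventuallyLE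
  have hCS := sq_integral_mul_le (μ := volume.restrict (Ioc 0 t)) (f := F₁ t) (g := h)
    (hF₁meas.comp measurable_prodMk_left).aestronglyMeasurable
    hhmeas.aestronglyMeasurable hts (hh.mono_set hsub)
  have hG0 : 0 ≤ ∫ s in Ioc 0 t, F₁ t s ^ 2 := integral_nonneg fun s => sq_nonneg _
  simp only [intervalIntegral.integral_of_le ht.1.le]
  set b := ∫ s in Ioc 0 t, F₁ t s * h s
  set G := ∫ s in Ioc 0 t, F₁ t s ^ 2
  set a := F t t * h t with ha
  have hb : b ^ 2 ≤ G * H := hCS.trans (mul_le_mul_of_nonneg_left hmono hG0)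
  have ha2 : a ^ 2 ≤ S * h t ^ 2 := by
    rw [ha, mul_pow]
    exact mul_le_mul_of_nonneg_right hdiag (sq_nonneg _)
  -- The difference of the two sides of Young's inequality is `(δ a - b)² / δ`.
  have hYoung : (a + b) ^ 2 ≤ (1 + δ) * a ^ 2 + (1 + δ) / δ * b ^ 2 := by
    have h0 : 0 ≤ (δ * a - b) ^ 2 / δ := by positivity
    have h1 : (1 + δ) * a ^ 2 + (1 + δ) / δ * b ^ 2 - (a + b) ^ 2 = (δ * a - b) ^ 2 / δ := by
      field_simp
      ring
    linarith
  calc (a + b) ^ 2 ≤ (1 + δ) * a ^ 2 + (1 + δ) / δ * b ^ 2 := hYoung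
    _ ≤ (1 + δ) * (S * h t ^ 2) + (1 + δ) / δ * (G * H) := by gcongr
    _ = (1 + δ) * S * h t ^ 2 + (1 + δ) / δ * H * G := by ring
end
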